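/- Let X, Y ⊆ ω. There exists an embedding of pcas of K1^X into K2^Y if and only if X is Turing reducible to Y. -/

import Mathlib

namespace PCAEmb

/-! ### Oracle computability -/

/-- Codes for partial functions computable relative to an oracle. -/
inductive OCode : Type
  | zero : OCode
  | succ : OCode
  | left : OCode
  | right : OCode
  | oracle : OCode
  | pair : OCode → OCode → OCode
  | comp : OCode → OCode → OCode
  | prec : OCode → OCode → OCode
  | rfind' : OCode → OCode

/-- Evaluation of an oracle code, relative to a (partial) oracle `O`. -/
def evalo (O : ℕ →. ℕ) : OCode → ℕ →. ℕ
  | .zero => pure 0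
  | .succ => Nat.succ
  | .left => ↑fun n : ℕ => n.unpair.1
  | .right => ↑fun n : ℕ => n.unpair.2
  | .oracle => O
  | .pair cf cg => fun n => Nat.pair <$> evalo O cf n <*> evalo O cg n
  | .comp cf cg => fun n => evalo O cg n >>= evalo O cf
  | .prec cf cg =>
      Nat.unpaired fun a n =>
        n.rec (evalo O cf a) fun y IH => do
          let i ← IH
          evalo O cg (Nat.pair a (Nat.pair y i))
  | .rfind' cf =>
      Nat.unpaired fun a m =>
        (Nat.rfind fun n => (fun x => x = 0) <$> evalo O cf (Nat.pair a (n + m))).map (· + m)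

/-- The standard numbering of oracle codes. -/
def OCode.ofNat : ℕ → OCode
  | 0 => .zero
  | 1 => .succ
  | 2 => .left
  | 3 => .right
  | 4 => .oracle
  | n + 5 =>
    match n % 4 with
    | 0 => .pair (OCode.ofNat (n / 4).unpair.1) (OCode.ofNat (n / 4).unpair.2)
    | 1 => .comp (OCode.ofNat (n / 4).unpair.1) (OCode.ofNat (n / 4).unpair.2)
    | 2 => .prec (OCode.ofNat (n / 4).unpair.1) (OCode.ofNat (n / 4).unpair.2)
    | _ => .rfind' (OCode.ofNat (n / 4).unpair.1)
  decreasing_by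
    all_goals
      have h1 := Nat.unpair_left_le (n / 4)
      have h2 := Nat.unpair_right_le (n / 4)
      have h3 := Nat.div_le_self n 4
      omega

/-- The `e`-th Turing functional with oracle `O` : `Φ_e^O`. -/
def phi (O : ℕ →. ℕ) (e : ℕ) : ℕ →. ℕ := evalo O (OCode.ofNat e)

/-- The characteristic function of a set of naturals, as a (total) partial function. -/
noncomputable def chi (X : Set ℕ) : ℕ →. ℕ :=
  fun n => Part.some (X.indicator (fun _ => 1) n)

/-- `ψ` is partial computable relative to the oracle `O`. -/
def RecursiveIn (O : ℕ →. ℕ) (ψ : ℕ →. ℕ) : Prop := ∃ c : OCode, evalo O c = ψ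

/-- Turing reducibility of sets of naturals. -/
def TuringLE (X Y : Set ℕ) : Prop := RecursiveIn (chi Y) (chi X)

/-- A total function `d : ℕ → ℕ` is `Y`-computable. -/
def ComputableIn (Y : Set ℕ) (d : ℕ → ℕ) : Prop :=
  RecursiveIn (chi Y) (fun n => Part.some (d n))

/-- A binary relation on `ℕ` is `Y`-c.e. -/
def CEIn (Y : Set ℕ) (R : ℕ → ℕ → Prop) : Prop :=
  ∃ c : OCode, ∀ n m, R n m ↔ (evalo (chi Y) c (Nat.pair n m)).Dom

/-- A set `W ⊆ ℕ` is `Y`-c.e. -/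
def CE1In (Y : Set ℕ) (W : Set ℕ) : Prop :=
  ∃ c : OCode, ∀ n, n ∈ W ↔ (evalo (chi Y) c n).Dom

/-- The canonical finite set `D_u` with code `u` (binary coding). -/
def Du (u : ℕ) : Set ℕ := {k | u.testBit k}

/-- Enumeration reducibility: `Z ≤ₑ Y`. -/
def EnumLE (Z Y : Set ℕ) : Prop :=
  ∃ W : Set ℕ, CE1In ∅ W ∧ ∀ x, x ∈ Z ↔ ∃ u, Nat.pair x u ∈ W ∧ Du u ⊆ Y

/-- The Turing jump `X'` of a set `X`. -/
def jump (X : Set ℕ) : Set ℕ := {e | (phi (chi X) e e).Dom}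

/-- The halting set `K = {e : φ_e(e)↓}`. -/
def Khalt : Set ℕ := jump ∅

/-! ### Partial combinatory algebras -/

/-- `k·a·b` as a partial element. -/
def app2 {α : Type*} (app : α → α → Part α) (a b c : α) : Part α :=
  (app a b).bind fun x => app x c

/-- `s·a·b·c` as a partial element. -/
def app3 {α : Type*} (app : α → α → Part α) (a b c d : α) : Part α :=
  (app2 app a b c).bind fun x => app x d

/-- A partial applicative structure is a pca if it has (distinct) combinators `s` and `k`. -/
def IsPCA {α : Type*} (app : α → α → Part α) : Prop :=
  ∃ s k : α, s ≠ k ∧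
    (∀ a b : α, app2 app k a b = Part.some a) ∧
    (∀ a b : α, (app2 app s a b).Dom) ∧
    (∀ a b c : α,
      app3 app s a b c = (app a c).bind fun x => (app b c).bind fun y => app x y)

/-- An embedding of partial combinatory algebras: an injection that preserves
(defined) application. -/
def IsPCAEmbedding {α β : Type*} (appA : α → α → Part α) (appB : β → β → Part β)
    (f : α → β) : Prop :=
  Function.Injective f ∧ ∀ a a' c : α, c ∈ appA a a' → f c ∈ appB (f a) (f a')

/-! ### Partial numberings -/

/-- `γ : ℕ ⇀ α` is a partial numbering (i.e. surjective). -/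
def IsNumbering {α : Type*} (γ : ℕ →. α) : Prop := ∀ a : α, ∃ n, a ∈ γ n

/-- `d` is an `(a⊥, a⊤)`-decider for `X` with respect to `γ`. -/
def IsDecider {α : Type*} (γ : ℕ →. α) (abot atop : α) (X : Set ℕ) (d : ℕ → ℕ) : Prop :=
  ∀ n, (n ∉ X → γ (d n) = Part.some abot) ∧ (n ∈ X → γ (d n) = Part.some atop)

/-- `γ` has `Y`-c.e. inequivalence. -/
def CEInequiv {α : Type*} (Y : Set ℕ) (γ : ℕ →. α) : Prop :=
  ∃ R : ℕ → ℕ → Prop, CEIn Y R ∧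
    ∀ n m, (γ n).Dom → (γ m).Dom → (R n m ↔ γ n ≠ γ m)

/-- `γ` is a `Y`-effectively pca-valued partial numbering: the application is
represented on codes by a partial `Y`-computable function `ψ`. -/
def EffValued {α : Type*} (Y : Set ℕ) (app : α → α → Part α) (γ : ℕ →. α) : Prop :=
  ∃ ψ : ℕ →. ℕ, RecursiveIn (chi Y) ψ ∧
    ∀ (n m : ℕ) (a b c : α), a ∈ γ n → b ∈ γ m → c ∈ app a b →
      ∃ j, j ∈ ψ (Nat.pair n m) ∧ c ∈ γ j

/-- `γ` is a strongly `Y`-effectively pca-valued partial numbering. -/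
def StrongEffValued {α : Type*} (Y : Set ℕ) (app : α → α → Part α) (γ : ℕ →. α) : Prop :=
  ∃ ψ : ℕ →. ℕ, RecursiveIn (chi Y) ψ ∧
    (∀ (n m : ℕ) (a b c : α), a ∈ γ n → b ∈ γ m → c ∈ app a b →
      ∃ j, j ∈ ψ (Nat.pair n m) ∧ c ∈ γ j) ∧
    (∀ (n m k l : ℕ) (a b a' b' c : α), a ∈ γ n → b ∈ γ m → a' ∈ γ k → b' ∈ γ l →
      c ∈ app a b → c ∈ app a' b' → ψ (Nat.pair n m) = ψ (Nat.pair k l))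

/-! ### The models -/

/-- Kleene's first model relativized to `X`: application `n · m = Φ_n^X(m)`. -/
noncomputable def k1App (X : Set ℕ) : ℕ → ℕ → Part ℕ := fun n m => phi (chi X) n m

/-- A total function as a partial function. -/
def toPFun (g : ℕ → ℕ) : ℕ →. ℕ := fun n => Part.some (g n)

/-- Join `f ⊕ g` of two partial functions. -/
def pjoin (f g : ℕ →. ℕ) : ℕ →. ℕ := fun n =>
  if n % 2 = 0 then f (n / 2) else g (n / 2)

/-- The totalization of a partial function, as a partial element of `ℕ → ℕ`:
defined iff `ψ` is total. -/
def partToTotal (ψ : ℕ →. ℕ) : Part (ℕ → ℕ) :=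
  ⟨∀ n, (ψ n).Dom, fun H n => (ψ n).get (H n)⟩

/-- Application in Kleene's second model `K₂`: `g · h = Φ^{g⊕h}_{g 0}`,
defined iff this function is total. -/
def k2App (g h : ℕ → ℕ) : Part (ℕ → ℕ) :=
  partToTotal (phi (pjoin (toPFun g) (toPFun h)) (g 0))

/-- Application in van Oosten's sequential model `B`: `θ · ρ = Φ^{θ⊕ρ}_{θ 0}`
(always defined, as a partial function). -/
def bApp (θ ρ : ℕ →. ℕ) : Part (ℕ →. ℕ) :=
  Part.some (fun n => (θ 0).bind fun e => phi (pjoin θ ρ) e n)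

/-- Restriction of a partial applicative structure to a subset. -/
def subApp {α : Type*} (app : α → α → Part α) (P : α → Prop)
    (a b : Subtype P) : Part (Subtype P) :=
  (app a.1 b.1).bind fun c => Part.assert (P c) fun h => Part.some ⟨c, h⟩

/-- Carrier of `K₂^X` : the total `X`-computable functions. -/
def K2el (X : Set ℕ) : Type := {g : ℕ → ℕ // RecursiveIn (chi X) (toPFun g)}

/-- Application in `K₂^X`. -/
def k2XApp (X : Set ℕ) : K2el X → K2el X → Part (K2el X) :=
  subApp k2App _

/-- Carrier of `B^X` : the partial `X`-computable functions. -/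
def Bel (X : Set ℕ) : Type := {θ : ℕ →. ℕ // RecursiveIn (chi X) θ}

/-- Application in `B^X`. -/
def bXApp (X : Set ℕ) : Bel X → Bel X → Part (Bel X) :=
  subApp bApp _

/-- Application in Scott's graph model `G`. -/
def gApp (A B : Set ℕ) : Part (Set ℕ) :=
  Part.some {n | ∃ u, Nat.pair n u ∈ A ∧ Du u ⊆ B}

/-- Carrier of `G^Z` : the sets enumeration-reducible to `Z`. -/
def Gel (Z : Set ℕ) : Type := {A : Set ℕ // EnumLE A Z}

/-- Application in `G^Z`. -/
def gXApp (Z : Set ℕ) : Gel Z → Gel Z → Part (Gel Z) :=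
  subApp gApp _

/-- `X ⊕ X̄ = {2n : n ∈ X} ∪ {2n+1 : n ∉ X}`. -/
def joinCompl (X : Set ℕ) : Set ℕ :=
  {k | ∃ n, (k = 2 * n ∧ n ∈ X) ∨ (k = 2 * n + 1 ∧ n ∉ X)}

/-! ### The λ-calculus -/

/-- Untyped λ-terms (de Bruijn representation). -/
inductive Lam : Type
  | var : ℕ → Lam
  | app : Lam → Lam → Lam
  | abs : Lam → Lam

/-- Lift (shift up) the free variables `≥ d` of a term. -/
def Lam.lift : Lam → ℕ → Lam
  | .var n, d => if n < d then .var n else .var (n + 1)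
  | .app M N, d => .app (M.lift d) (N.lift d)
  | .abs M, d => .abs (M.lift (d + 1))

/-- Substitution `M[k := N]` (de Bruijn). -/
def Lam.subst : Lam → ℕ → Lam → Lam
  | .var n, k, N => if n = k then N else if k < n then .var (n - 1) else .var n
  | .app M M', k, N => .app (M.subst k N) (M'.subst k N)
  | .abs M, k, N => .abs (M.subst (k + 1) (N.lift 0))

/-- β-equivalence of λ-terms. -/
inductive BetaEq : Lam → Lam → Prop
  | beta (M N : Lam) : BetaEq (.app (.abs M) N) (M.subst 0 N)
  | refl (M : Lam) : BetaEq M M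
  | symm {M N : Lam} : BetaEq M N → BetaEq N M
  | trans {M N P : Lam} : BetaEq M N → BetaEq N P → BetaEq M P
  | appCongr {M M' N N' : Lam} :
      BetaEq M M' → BetaEq N N' → BetaEq (.app M N) (.app M' N')
  | absCongr {M M' : Lam} : BetaEq M M' → BetaEq (.abs M) (.abs M')

/-- βη-equivalence of λ-terms. -/
inductive BetaEtaEq : Lam → Lam → Prop
  | beta (M N : Lam) : BetaEtaEq (.app (.abs M) N) (M.subst 0 N)
  | eta (M : Lam) : BetaEtaEq (.abs (.app (M.lift 0) (.var 0))) M
  | refl (M : Lam) : BetaEtaEq M M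
  | symm {M N : Lam} : BetaEtaEq M N → BetaEtaEq N M
  | trans {M N P : Lam} : BetaEtaEq M N → BetaEtaEq N P → BetaEtaEq M P
  | appCongr {M M' N N' : Lam} :
      BetaEtaEq M M' → BetaEtaEq N N' → BetaEtaEq (.app M N) (.app M' N')
  | absCongr {M M' : Lam} : BetaEtaEq M M' → BetaEtaEq (.abs M) (.abs M')

def lamBetaSetoid : Setoid Lam := ⟨BetaEq, ⟨BetaEq.refl, BetaEq.symm, BetaEq.trans⟩⟩

def lamBetaEtaSetoid : Setoid Lam :=
  ⟨BetaEtaEq, ⟨BetaEtaEq.refl, BetaEtaEq.symm, BetaEtaEq.trans⟩⟩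

/-- The pca `λ` of λ-terms modulo β-equivalence. -/
def LamBeta : Type := Quotient lamBetaSetoid

/-- The pca `λη` of λ-terms modulo βη-equivalence. -/
def LamBetaEta : Type := Quotient lamBetaEtaSetoid

/-- Application in `λ` (total). -/
def lamBetaApp : LamBeta → LamBeta → Part LamBeta := fun a b =>
  Part.some (Quotient.map₂ Lam.app (fun _ _ h1 _ _ h2 => BetaEq.appCongr h1 h2) a b)

/-- Application in `λη` (total). -/
def lamBetaEtaApp : LamBetaEta → LamBetaEta → Part LamBetaEta := fun a b =>
  Part.some (Quotient.map₂ Lam.app (fun _ _ h1 _ _ h2 => BetaEtaEq.appCongr h1 h2) a b)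


/-! ### Basic facts -/

theorem exists_ocode {f : ℕ →. ℕ} (hf : Nat.Partrec f) : ∃ c : OCode, ∀ O, evalo O c = f := by
  induction hf with
  | zero => exact ⟨.zero, fun O => rfl⟩
  | succ => exact ⟨.succ, fun O => rfl⟩
  | left => exact ⟨.left, fun O => rfl⟩
  | right => exact ⟨.right, fun O => rfl⟩
  | pair _ _ ihf ihg =>
    obtain ⟨cf, hf⟩ := ihf
    obtain ⟨cg, hg⟩ := ihg
    exact ⟨.pair cf cg, fun O => by simp only [evalo, hf O, hg O]; rfl⟩
  | comp _ _ ihf ihg =>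
    obtain ⟨cf, hf⟩ := ihf
    obtain ⟨cg, hg⟩ := ihg
    exact ⟨.comp cf cg, fun O => by simp only [evalo, hf O, hg O]; rfl⟩
  | prec _ _ ihf ihg =>
    obtain ⟨cf, hf⟩ := ihf
    obtain ⟨cg, hg⟩ := ihg
    exact ⟨.prec cf cg, fun O => by simp only [evalo, hf O, hg O]; rfl⟩
  | rfind _ ih =>
    rename_i f _
    obtain ⟨cf, hf⟩ := ih
    refine ⟨.comp (.rfind' cf) (.pair (.pair .left .right) .zero), fun O => ?_⟩
    funext n
    simp [evalo, hf O, Seq.seq, pure, PFun.pure]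
    rfl

theorem exists_ocode_tot {f : ℕ → ℕ} (hf : Primrec f) :
    ∃ c : OCode, ∀ O n, evalo O c n = Part.some (f n) := by
  obtain ⟨c, hc⟩ := exists_ocode (Nat.Partrec.of_primrec (Primrec.nat_iff.1 hf))
  exact ⟨c, fun O n => by rw [hc O]; rfl⟩

theorem evalo_pair {O : ℕ →. ℕ} {c d : OCode} {n a b : ℕ} (h1 : evalo O c n = Part.some a)
    (h2 : evalo O d n = Part.some b) : evalo O (.pair c d) n = Part.some (Nat.pair a b) := by
  simp [evalo, h1, h2, Seq.seq]

theorem evalo_comp {O : ℕ →. ℕ} {c d : OCode} {n a : ℕ} 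
    (h2 : evalo O d n = Part.some a) : evalo O (.comp c d) n = evalo O c a := by
  simp only [evalo, h2]
  exact Part.bind_some _ _

theorem evalo_id {O : ℕ →. ℕ} {n : ℕ} :
    evalo O (.pair .left .right) n = Part.some n := by
  have := @evalo_pair O .left .right n n.unpair.1 n.unpair.2 rfl rfl
  simpa using this

/-- index of a code -/
def OCode.toNat : OCode → ℕ
  | .zero => 0
  | .succ => 1
  | .left => 2
  | .right => 3
  | .oracle => 4
  | .pair a b => 4 * Nat.pair a.toNat b.toNat + 0 + 5
  | .comp a b => 4 * Nat.pair a.toNat b.toNat + 1 + 5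
  | .prec a b => 4 * Nat.pair a.toNat b.toNat + 2 + 5
  | .rfind' a => 4 * Nat.pair a.toNat 0 + 3 + 5

theorem ofNat_add (n : ℕ) : OCode.ofNat (n + 5) = match n % 4 with
    | 0 => .pair (OCode.ofNat (n / 4).unpair.1) (OCode.ofNat (n / 4).unpair.2)
    | 1 => .comp (OCode.ofNat (n / 4).unpair.1) (OCode.ofNat (n / 4).unpair.2)
    | 2 => .prec (OCode.ofNat (n / 4).unpair.1) (OCode.ofNat (n / 4).unpair.2)
    | _ => .rfind' (OCode.ofNat (n / 4).unpair.1) := by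
  rw [OCode.ofNat]

theorem ofNat_add' (q r : ℕ) : r < 4 → OCode.ofNat (4 * q + r + 5) = match r with
    | 0 => .pair (OCode.ofNat q.unpair.1) (OCode.ofNat q.unpair.2)
    | 1 => .comp (OCode.ofNat q.unpair.1) (OCode.ofNat q.unpair.2)
    | 2 => .prec (OCode.ofNat q.unpair.1) (OCode.ofNat q.unpair.2)
    | _ => .rfind' (OCode.ofNat q.unpair.1) := by
  intro hr
  rw [ofNat_add]
  have h1 : (4 * q + r) % 4 = r := by omega
  have h2 : (4 * q + r) / 4 = q := by omega
  rw [h1, h2]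

theorem ofNat_toNat (c : OCode) : OCode.ofNat c.toNat = c := by
  induction c with
  | zero => simp [OCode.toNat, OCode.ofNat]
  | succ => simp [OCode.toNat, OCode.ofNat]
  | left => simp [OCode.toNat, OCode.ofNat]
  | right => simp [OCode.toNat, OCode.ofNat]
  | oracle => simp [OCode.toNat, OCode.ofNat]
  | pair a b iha ihb => refine (ofNat_add' _ 0 (by omega)).trans ?_; simp [iha, ihb]
  | comp a b iha ihb => refine (ofNat_add' _ 1 (by omega)).trans ?_; simp [iha, ihb]
  | prec a b iha ihb => refine (ofNat_add' _ 2 (by omega)).trans ?_; simp [iha, ihb]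
  | rfind' a iha => refine (ofNat_add' _ 3 (by omega)).trans ?_; simp [iha]

/-- replace the oracle by code number `j` -/
def tr (j : ℕ) : ℕ → ℕ
  | 0 => 0
  | 1 => 1
  | 2 => 2
  | 3 => 3
  | 4 => j
  | n + 5 => 4 * Nat.pair (tr j (n / 4).unpair.1) (tr j (n / 4).unpair.2) + n % 4 + 5
  decreasing_by
    all_goals
      have h1 := Nat.unpair_left_le (n / 4)
      have h2 := Nat.unpair_right_le (n / 4)
      have h3 := Nat.div_le_self n 4
      omega

theorem tr_spec {O O' : ℕ →. ℕ} {j : ℕ} (hj : evalo O (OCode.ofNat j) = O') (n : ℕ) :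
    evalo O (OCode.ofNat (tr j n)) = evalo O' (OCode.ofNat n) := by
  induction n using Nat.strong_induction_on with
  | _ n ih =>
    match n with
    | 0 => simp [tr, OCode.ofNat, evalo]
    | 1 => simp [tr, OCode.ofNat, evalo]
    | 2 => simp [tr, OCode.ofNat, evalo]
    | 3 => simp [tr, OCode.ofNat, evalo]
    | 4 => simp [tr, OCode.ofNat, evalo, hj]
    | n + 5 =>
      have h1 := Nat.unpair_left_le (n / 4)
      have h2 := Nat.unpair_right_le (n / 4)
      have h3 := Nat.div_le_self n 4
      have ia := ih (n / 4).unpair.1 (by omega)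
      have ib := ih (n / 4).unpair.2 (by omega)
      have hr : n % 4 < 4 := Nat.mod_lt _ (by norm_num)
      rw [tr, ofNat_add' _ _ hr, ofNat_add]
      generalize n % 4 = r at hr
      interval_cases r <;> simp only [evalo, Nat.unpair_pair, ia, ib] <;> rfl

/-- the step function for `tr` -/
def trStep (j : ℕ) (l : List ℕ) : ℕ :=
  if l.length < 4 then l.length else if l.length = 4 then j else
    4 * Nat.pair (l.getD ((l.length - 5) / 4).unpair.1 0) (l.getD ((l.length - 5) / 4).unpair.2 0)
      + (l.length - 5) % 4 + 5

theorem trStep_spec (j n : ℕ) : trStep j ((List.range n).map (tr j)) = tr j n := by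
  match n with
  | 0 => simp [tr, trStep]
  | 1 => simp [tr, trStep]
  | 2 => simp [tr, trStep]
  | 3 => simp [tr, trStep]
  | 4 => simp [tr, trStep]
  | n + 5 =>
    have h1 := Nat.unpair_left_le (n / 4)
    have h2 := Nat.unpair_right_le (n / 4)
    have h3 := Nat.div_le_self n 4
    have e1 : (n / 4).unpair.1 < n + 5 := by omega
    have e2 : (n / 4).unpair.2 < n + 5 := by omega
    simp [tr, trStep, List.getD_eq_getElem?_getD, e1, e2]

theorem trStep_primrec (j : ℕ) : Primrec (trStep j) := by
  have hl : Primrec (fun l : List ℕ => l.length) := Primrec.list_length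
  have h5 : Primrec (fun l : List ℕ => l.length - 5) := Primrec.nat_sub.comp hl (Primrec.const 5)
  have hu : Primrec (fun l : List ℕ => ((l.length - 5) / 4).unpair) :=
    Primrec.unpair.comp (Primrec.nat_div.comp h5 (Primrec.const 4))
  have hg := Primrec.list_getD (0 : ℕ)
  refine Primrec.ite (Primrec.nat_lt.comp hl (Primrec.const 4)) hl
    (Primrec.ite (Primrec.eq.comp hl (Primrec.const 4)) (Primrec.const j) ?_)
  refine Primrec.nat_add.comp (Primrec.nat_add.comp (Primrec.nat_mul.comp (Primrec.const 4)
    (Primrec₂.natPair.comp (hg.comp Primrec.id (Primrec.fst.comp hu))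
      (hg.comp Primrec.id (Primrec.snd.comp hu))))
      (Primrec.nat_mod.comp h5 (Primrec.const 4))) (Primrec.const 5)

theorem tr_primrec (j : ℕ) : Primrec (tr j) := by
  have := Primrec.nat_strong_rec (fun (_ : Unit) n => tr j n) (g := fun _ l => some (trStep j l))
    (Primrec.option_some.comp ((trStep_primrec j).comp Primrec.snd))
    (fun _ n => by rw [trStep_spec])
  exact this.comp (Primrec.const ()) Primrec.id

/-! ### From a Turing reduction to an embedding -/

/-- the code of the identity -/
def cId : OCode := .pair .left .right

theorem evalo_cId {O : ℕ →. ℕ} {n : ℕ} : evalo O cId n = Part.some n := evalo_id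

/-- index arithmetic for the code wrapping `t` -/
def wIdx (s d t : ℕ) : ℕ :=
  4 * Nat.pair d (4 * Nat.pair (4 * Nat.pair t s + 1 + 5) cId.toNat + 0 + 5) + 1 + 5

theorem ofNat_wIdx (s : OCode) (d t : ℕ) : OCode.ofNat (wIdx s.toNat d t) =
    .comp (OCode.ofNat d) (.pair (.comp (OCode.ofNat t) s) cId) := by
  unfold wIdx
  refine (ofNat_add' _ 1 (by omega)).trans ?_
  simp only [Nat.unpair_pair]
  congr 1
  refine (ofNat_add' _ 0 (by omega)).trans ?_
  simp only [Nat.unpair_pair]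
  congr 1
  · refine (ofNat_add' _ 1 (by omega)).trans ?_
    simp only [Nat.unpair_pair, ofNat_toNat]
  · exact ofNat_toNat _

theorem wIdx_primrec (s : ℕ) : Primrec₂ (wIdx s) := by
  have h : ∀ (k : ℕ) {f g : ℕ × ℕ → ℕ}, Primrec f → Primrec g →
      Primrec (fun x => 4 * Nat.pair (f x) (g x) + k + 5) := fun k f g hf hg =>
    Primrec.nat_add.comp (Primrec.nat_add.comp (Primrec.nat_mul.comp (Primrec.const 4)
      (Primrec₂.natPair.comp hf hg)) (Primrec.const k)) (Primrec.const 5)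
  exact h 1 Primrec.fst (h 0 (h 1 Primrec.snd (Primrec.const s)) (Primrec.const _))

theorem pjoin_even (g h : ℕ →. ℕ) (x : ℕ) : pjoin g h (2 * x) = g x := by
  simp [pjoin]

theorem pjoin_odd (g h : ℕ →. ℕ) (x : ℕ) : pjoin g h (2 * x + 1) = h x := by
  have h1 : (2 * x + 1) / 2 = x := by omega
  have h2 : (2 * x + 1) % 2 ≠ 0 := by omega
  simp only [pjoin, h1, if_neg h2]

theorem mem_k2App {g h r : ℕ → ℕ} :
    r ∈ k2App g h ↔ ∀ k, r k ∈ phi (pjoin (toPFun g) (toPFun h)) (g 0) k := by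
  unfold k2App partToTotal
  constructor
  · rintro ⟨H, rfl⟩ k
    exact Part.get_mem (H k)
  · intro H
    exact ⟨fun k => (H k).1, funext fun k => (H k).2⟩

theorem mem_subApp {α : Type*} {app : α → α → Part α} {P : α → Prop} {a b c : Subtype P} :
    c ∈ subApp app P a b ↔ c.1 ∈ app a.1 b.1 := by
  unfold subApp
  rw [Part.mem_bind_iff]
  constructor
  · rintro ⟨x, hx, h⟩
    rw [Part.mem_assert_iff] at h
    obtain ⟨h, h'⟩ := h
    rw [Part.mem_some_iff] at h'
    subst h'
    exact hx
  · intro h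
    refine ⟨c.1, h, ?_⟩
    rw [Part.mem_assert_iff]
    exact ⟨c.2, Part.mem_some _⟩

theorem mem_k2XApp {Y : Set ℕ} {a b c : K2el Y} :
    c ∈ k2XApp Y a b ↔ ∀ k, c.1 k ∈ phi (pjoin (toPFun a.1) (toPFun b.1)) (a.1 0) k :=
  (mem_subApp (app := k2App)).trans mem_k2App

/-- the embedding -/
def embFun (s j d : ℕ) (χ : ℕ → ℕ) (n : ℕ) (k : ℕ) : ℕ :=
  if k = 0 then wIdx s d (tr j n) else if k = 1 then n else if k = 2 then d else χ (k - 3)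

theorem emb_of_le (X Y : Set ℕ) (h : TuringLE X Y) :
    ∃ f : ℕ → K2el Y, IsPCAEmbedding (k1App X) (k2XApp Y) f := by
  obtain ⟨cX, hcX⟩ := h
  let χ : ℕ → ℕ := X.indicator (fun _ => 1)
  have hχ : ∀ n, chi X n = Part.some (χ n) := fun n => rfl
  obtain ⟨c3, hc3⟩ := exists_ocode_tot (Primrec.const (α := ℕ) 3)
  obtain ⟨c4, hc4⟩ := exists_ocode_tot (Primrec.const (α := ℕ) 4)
  obtain ⟨cJ, hcJ⟩ := exists_ocode_tot (f := fun k : ℕ => 2 * (k + 3))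
    (Primrec.nat_mul.comp (Primrec.const 2) (Primrec.nat_add.comp Primrec.id (Primrec.const 3)))
  obtain ⟨cE, hcE⟩ := exists_ocode_tot (f := fun k : ℕ => 2 * k.unpair.2)
    (Primrec.nat_mul.comp (Primrec.const 2) (Primrec.snd.comp Primrec.unpair))
  let S : OCode := .comp .oracle c3
  let s := S.toNat
  let J : OCode := .comp .oracle cJ
  let j := J.toNat
  let G : ℕ → ℕ := fun z =>
    if z.unpair.1.unpair.2 = 0 then wIdx s z.unpair.2.unpair.1 (tr j z.unpair.1.unpair.1)
    else if z.unpair.1.unpair.2 = 1 then z.unpair.1.unpair.1 else z.unpair.2.unpair.2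
  have hG : Primrec G := by
    have u1 : Primrec (fun z : ℕ => z.unpair.1.unpair) :=
      Primrec.unpair.comp (Primrec.fst.comp Primrec.unpair)
    have u2 : Primrec (fun z : ℕ => z.unpair.2.unpair) :=
      Primrec.unpair.comp (Primrec.snd.comp Primrec.unpair)
    refine Primrec.ite (Primrec.eq.comp (Primrec.snd.comp u1) (Primrec.const 0))
      ((wIdx_primrec s).comp (Primrec.fst.comp u2) ((tr_primrec j).comp (Primrec.fst.comp u1)))
      (Primrec.ite (Primrec.eq.comp (Primrec.snd.comp u1) (Primrec.const 1))
        (Primrec.fst.comp u1) (Primrec.snd.comp u2))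
  obtain ⟨cG, hcG⟩ := exists_ocode_tot hG
  let D : OCode := .comp cG (.pair cId (.pair (.comp .oracle c4) (.comp .oracle cE)))
  let d := D.toNat
  let e := embFun s j d χ
  have he : ∀ n, RecursiveIn (chi Y) (toPFun (e n)) := by
    intro n
    let P : ℕ → ℕ := fun z => if z.unpair.1 = 0 then wIdx s d (tr j n)
      else if z.unpair.1 = 1 then n else if z.unpair.1 = 2 then d else z.unpair.2
    have hP : Primrec P := by
      have u1 : Primrec (fun z : ℕ => z.unpair.1) := Primrec.fst.comp Primrec.unpair
      have u2 : Primrec (fun z : ℕ => z.unpair.2) := Primrec.snd.comp Primrec.unpair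
      exact Primrec.ite (Primrec.eq.comp u1 (Primrec.const 0)) (Primrec.const _)
        (Primrec.ite (Primrec.eq.comp u1 (Primrec.const 1)) (Primrec.const _)
          (Primrec.ite (Primrec.eq.comp u1 (Primrec.const 2)) (Primrec.const _) u2))
    obtain ⟨cP, hcP⟩ := exists_ocode_tot hP
    obtain ⟨cs, hcs⟩ := exists_ocode_tot (f := fun k : ℕ => k - 3)
      (Primrec.nat_sub.comp Primrec.id (Primrec.const 3))
    refine ⟨.comp cP (.pair cId (.comp cX cs)), ?_⟩
    refine funext fun k => ?_
    change evalo _ _ k = Part.some (e n k)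
    have h1 : evalo (chi Y) (.comp cX cs) k = Part.some (χ (k - 3)) := by
      rw [evalo_comp (hcs _ _), hcX]; rfl
    rw [evalo_comp (evalo_pair evalo_cId h1), hcP]
    simp only [P, Nat.unpair_pair]
    rfl
  refine ⟨fun n => ⟨e n, he n⟩, ?_, ?_⟩
  · intro a b hab
    have := congrFun (congrArg Subtype.val hab) 1
    simpa [e, embFun] using this
  · intro a m c hc
    refine mem_k2XApp.2 ?_
    intro k
    change e c k ∈ phi (pjoin (toPFun (e a)) (toPFun (e m))) (e a 0) k
    set O := pjoin (toPFun (e a)) (toPFun (e m)) with hO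
    have hev : ∀ x, O (2 * x) = Part.some (e a x) := fun x => pjoin_even _ _ x
    have hod : ∀ x, O (2 * x + 1) = Part.some (e m x) := fun x => pjoin_odd _ _ x
    have e0 : e a 0 = wIdx S.toNat D.toNat (tr j a) := by simp [e, embFun, s, d]
    have hJ : evalo O (OCode.ofNat j) = chi X := by
      funext x
      rw [ofNat_toNat]
      rw [evalo_comp (hcJ O x)]
      change O (2 * (x + 3)) = _
      rw [hev, hχ]
      simp [e, embFun]
    have hS : evalo O S k = Part.some m := by
      rw [evalo_comp (hc3 O k)]
      change O (2 * 1 + 1) = _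
      rw [hod]
      simp [e, embFun]
    have hT : evalo O (.comp (OCode.ofNat (tr j a)) S) k = Part.some c := by
      rw [evalo_comp hS, tr_spec hJ]
      exact Part.eq_some_iff.2 hc
    have h4 : ∀ x, evalo O (.comp .oracle c4) x = Part.some d := by
      intro x
      rw [evalo_comp (hc4 O x)]
      change O (2 * 2) = _
      rw [hev]
      simp [e, embFun]
    have hE : ∀ x, evalo O (.comp .oracle cE) x = Part.some (e a x.unpair.2) := by
      intro x
      rw [evalo_comp (hcE O x)]
      exact hev _
    unfold phi
    rw [e0, ofNat_wIdx, ofNat_toNat, evalo_comp (evalo_pair hT evalo_cId),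
      evalo_comp (evalo_pair evalo_cId (evalo_pair (h4 _) (hE _))), hcG, Part.mem_some_iff]
    simp only [G, Nat.unpair_pair]
    simp only [e, embFun]
    split_ifs <;> rfl

/-! ### Finite approximations of oracle computations -/

/-- bounded search -/
def bsearch (t : ℕ) (g : ℕ → Option ℕ) : Option ℕ :=
  let n := (List.range t).findIdx (fun n => decide ((g n).getD 0 = 0))
  if g n = some 0 then some n else none

/-- bounded evaluation with a finite oracle -/
def evn (t : ℕ) (o : ℕ → Option ℕ) : OCode → ℕ → Option ℕ
  | .zero, _ => some 0
  | .succ, n => some (n + 1)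
  | .left, n => some n.unpair.1
  | .right, n => some n.unpair.2
  | .oracle, n => o n
  | .pair cf cg, n => (evn t o cf n).bind fun a => (evn t o cg n).bind fun b => some (Nat.pair a b)
  | .comp cf cg, n => (evn t o cg n).bind fun a => evn t o cf a
  | .prec cf cg, n =>
      n.unpair.2.rec (evn t o cf n.unpair.1) fun y IH =>
        IH.bind fun i => evn t o cg (Nat.pair n.unpair.1 (Nat.pair y i))
  | .rfind' cf, n =>
      (bsearch t fun k => evn t o cf (Nat.pair n.unpair.1 (k + n.unpair.2))).map
        (· + n.unpair.2)

theorem bsearch_primrec {α : Type*} [Primcodable α] {t : α → ℕ} {g : α → ℕ → Option ℕ}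
    (ht : Primrec t) (hg : Primrec₂ g) : Primrec (fun a => bsearch (t a) (g a)) := by
  have h1 : Primrec fun a => (List.range (t a)).findIdx (fun n => decide ((g a n).getD 0 = 0)) :=
    Primrec.list_findIdx (Primrec.list_range.comp ht)
      (Primrec.eq.comp (Primrec.option_getD.comp hg (Primrec.const 0)) (Primrec.const 0)).decide
  exact Primrec.ite (Primrec.eq.comp (hg.comp Primrec.id h1) (Primrec.const (some 0)))
    (Primrec.option_some.comp h1) (Primrec.const none)

theorem evn_primrec {α : Type*} [Primcodable α] {t : α → ℕ} {o : α → ℕ → Option ℕ}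
    (ht : Primrec t) (ho : Primrec₂ o) (c : OCode) :
    Primrec₂ (fun a x => evn (t a) (o a) c x) := by
  induction c with
  | zero => exact Primrec.const _
  | succ => exact Primrec.option_some.comp (Primrec.succ.comp Primrec.snd)
  | left => exact Primrec.option_some.comp (Primrec.fst.comp (Primrec.unpair.comp Primrec.snd))
  | right => exact Primrec.option_some.comp (Primrec.snd.comp (Primrec.unpair.comp Primrec.snd))
  | oracle => exact ho
  | pair cf cg hf hg =>
    refine Primrec.option_bind hf ?_
    refine Primrec.option_bind (hg.comp (Primrec.fst.comp Primrec.fst)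
      (Primrec.snd.comp Primrec.fst)) ?_
    exact Primrec.option_some.comp (Primrec₂.natPair.comp (Primrec.snd.comp Primrec.fst)
      Primrec.snd)
  | comp cf cg hf hg =>
    exact Primrec.option_bind hg (hf.comp (Primrec.fst.comp Primrec.fst) Primrec.snd)
  | prec cf cg hf hg =>
    have hu : Primrec (fun p : α × ℕ => p.2.unpair) := Primrec.unpair.comp Primrec.snd
    refine Primrec.nat_rec' (f := fun p : α × ℕ => p.2.unpair.2)
      (g := fun p : α × ℕ => evn (t p.1) (o p.1) cf p.2.unpair.1)
      (h := fun p q => q.2.bind fun i =>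
        evn (t p.1) (o p.1) cg (Nat.pair p.2.unpair.1 (Nat.pair q.1 i)))
      (Primrec.snd.comp hu) (hf.comp Primrec.fst (Primrec.fst.comp hu)) ?_
    refine Primrec.option_bind (Primrec.snd.comp Primrec.snd) ?_
    refine hg.comp (Primrec.fst.comp (Primrec.fst.comp Primrec.fst)) ?_
    exact Primrec₂.natPair.comp (Primrec.fst.comp (hu.comp (Primrec.fst.comp Primrec.fst)))
      (Primrec₂.natPair.comp (Primrec.fst.comp (Primrec.snd.comp Primrec.fst)) Primrec.snd)
  | rfind' cf hf =>
    have hu : Primrec (fun p : α × ℕ => p.2.unpair) := Primrec.unpair.comp Primrec.snd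
    refine Primrec.option_map (bsearch_primrec (ht.comp Primrec.fst) ?_) ?_
    · refine hf.comp (Primrec.fst.comp Primrec.fst) ?_
      exact Primrec₂.natPair.comp (Primrec.fst.comp (hu.comp Primrec.fst))
        (Primrec.nat_add.comp Primrec.snd (Primrec.snd.comp (hu.comp Primrec.fst)))
    · exact Primrec.nat_add.comp Primrec.snd (Primrec.snd.comp (hu.comp Primrec.fst))

theorem bsearch_sound {t : ℕ} {g : ℕ → Option ℕ} {n : ℕ} (h : bsearch t g = some n) :
    g n = some 0 ∧ ∀ m < n, ∃ v, g m = some v ∧ v ≠ 0 := by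
  unfold bsearch at h
  simp only at h
  split_ifs at h with h0
  simp only [Option.some.injEq] at h
  subst h
  refine ⟨h0, fun m hm => ?_⟩
  have := List.not_of_lt_findIdx hm
  simp only [List.getElem_range, decide_eq_false_iff_not] at this
  cases hg : g m with
  | none => simp [hg] at this
  | some v => exact ⟨v, rfl, by simpa [hg] using this⟩

theorem bsearch_complete {t : ℕ} {g : ℕ → Option ℕ} {n : ℕ} (hn : n < t) (h0 : g n = some 0)
    (h : ∀ m < n, ∃ v, g m = some v ∧ v ≠ 0) : bsearch t g = some n := by
  have : (List.range t).findIdx (fun n => decide ((g n).getD 0 = 0)) = n := by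
    rw [List.findIdx_eq (by simpa using hn)]
    refine ⟨by simp [h0], fun m hm => ?_⟩
    obtain ⟨v, hv, hv0⟩ := h m hm
    simp [hv, hv0]
  unfold bsearch
  simp only [this, h0, if_true]

theorem evn_sound {t : ℕ} {o : ℕ → Option ℕ} {O : ℕ →. ℕ} (ho : ∀ x v, o x = some v → v ∈ O x)
    (c : OCode) : ∀ n v, evn t o c n = some v → v ∈ evalo O c n := by
  induction c with
  | zero => intro n v h; simp only [evn, Option.some.injEq] at h; subst h; exact Part.mem_some _
  | succ => intro n v h; simp only [evn, Option.some.injEq] at h; subst h; exact Part.mem_some _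
  | left => intro n v h; simp only [evn, Option.some.injEq] at h; subst h; exact Part.mem_some _
  | right => intro n v h; simp only [evn, Option.some.injEq] at h; subst h; exact Part.mem_some _
  | oracle => exact ho
  | pair cf cg hf hg =>
    intro n v h
    simp only [evn, Option.bind_eq_some_iff, Option.some.injEq] at h
    obtain ⟨a, ha, b, hb, rfl⟩ := h
    have h1 := Part.eq_some_iff.2 (hf _ _ ha)
    have h2 := Part.eq_some_iff.2 (hg _ _ hb)
    rw [evalo_pair h1 h2]
    exact Part.mem_some _
  | comp cf cg hf hg =>
    intro n v h
    simp only [evn, Option.bind_eq_some_iff] at h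
    obtain ⟨a, ha, hb⟩ := h
    rw [evalo_comp (Part.eq_some_iff.2 (hg _ _ ha))]
    exact hf _ _ hb
  | prec cf cg hf hg =>
    intro n v h
    simp only [evn] at h
    simp only [evalo, Nat.unpaired]
    generalize n.unpair.2 = k at *
    generalize n.unpair.1 = a at *
    induction k generalizing v with
    | zero => exact hf _ _ h
    | succ k ih =>
      simp only [Option.bind_eq_some_iff] at h
      obtain ⟨i, hi, hv⟩ := h
      exact Part.mem_bind_iff.2 ⟨i, ih _ hi, hg _ _ hv⟩
  | rfind' cf hf =>
    intro n v h
    simp only [evn, Option.map_eq_some_iff] at h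
    obtain ⟨k, hk, rfl⟩ := h
    obtain ⟨h0, h1⟩ := bsearch_sound hk
    simp only [evalo, Nat.unpaired]
    refine Part.mem_map _ ?_
    refine Nat.mem_rfind.2 ⟨?_, ?_⟩
    · exact (Part.mem_map_iff _).2 ⟨0, hf _ _ h0, by simp⟩
    · intro m hm
      obtain ⟨v, hv, hv0⟩ := h1 m hm
      exact (Part.mem_map_iff _).2 ⟨v, hf _ _ hv, by simp [hv0]⟩

theorem evn_complete {o : ℕ → ℕ → Option ℕ} {O : ℕ →. ℕ}
    (ho : ∀ x, ∀ v ∈ O x, ∀ᶠ t in Filter.atTop, o t x = some v)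
    (c : OCode) : ∀ n, ∀ v ∈ evalo O c n, ∀ᶠ t in Filter.atTop, evn t (o t) c n = some v := by
  induction c with
  | zero => intro n v h; cases Part.mem_some_iff.1 h; exact Filter.Eventually.of_forall fun _ => rfl
  | succ => intro n v h; cases Part.mem_some_iff.1 h; exact Filter.Eventually.of_forall fun _ => rfl
  | left => intro n v h; cases Part.mem_some_iff.1 h; exact Filter.Eventually.of_forall fun _ => rfl
  | right => intro n v h; cases Part.mem_some_iff.1 h; exact Filter.Eventually.of_forall fun _ => rfl
  | oracle => exact ho
  | pair cf cg hf hg =>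
    intro n v h
    have h' : v ∈ (evalo O cf n).bind fun a => (evalo O cg n).map (Nat.pair a) := by
      simp only [evalo, Seq.seq] at h
      simpa using h
    obtain ⟨a, ha, h2⟩ := Part.mem_bind_iff.1 h'
    obtain ⟨b, hb, rfl⟩ := (Part.mem_map_iff _).1 h2
    filter_upwards [hf _ _ ha, hg _ _ hb] with t h1 h2
    simp [evn, h1, h2]
  | comp cf cg hf hg =>
    intro n v h
    obtain ⟨a, ha, h2⟩ := Part.mem_bind_iff.1 h
    filter_upwards [hg _ _ ha, hf _ _ h2] with t h1 h2
    simp [evn, h1, h2]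
  | prec cf cg hf hg =>
    intro n v h
    simp only [evalo, Nat.unpaired] at h
    simp only [evn]
    generalize n.unpair.2 = k at *
    generalize n.unpair.1 = a at *
    induction k generalizing v with
    | zero => exact hf _ _ h
    | succ k ih =>
      obtain ⟨i, hi, hv⟩ := Part.mem_bind_iff.1 h
      filter_upwards [ih _ hi, hg _ _ hv] with t h1 h2
      simp only [h1, Option.bind_some, h2]
  | rfind' cf hf =>
    intro n v h
    simp only [evalo, Nat.unpaired] at h
    obtain ⟨k, hk, rfl⟩ := (Part.mem_map_iff _).1 h
    obtain ⟨h0, h1⟩ := Nat.mem_rfind.1 hk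
    obtain ⟨z, hz, hz0⟩ := (Part.mem_map_iff _).1 h0
    have hz0 : z = 0 := by simpa using hz0
    subst hz0
    have h1' : ∀ m ∈ Finset.range k, ∀ᶠ t in Filter.atTop, ∃ v,
        evn t (o t) cf (Nat.pair n.unpair.1 (m + n.unpair.2)) = some v ∧ v ≠ 0 := by
      intro m hm
      obtain ⟨v, hv, hv0⟩ := (Part.mem_map_iff _).1 (h1 (Finset.mem_range.1 hm))
      have hv0 : v ≠ 0 := by simpa using hv0
      filter_upwards [hf _ _ hv] with t ht
      exact ⟨v, ht, hv0⟩
    have h2 := (Filter.eventually_all_finset (Finset.range k)).2 h1'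
    filter_upwards [hf _ _ hz, h2, Filter.eventually_gt_atTop k] with t e0 e1 e2
    have := bsearch_complete (t := t) (n := k)
      (g := fun k => evn t (o t) cf (Nat.pair n.unpair.1 (k + n.unpair.2))) e2 e0
      (fun m hm => e1 m (Finset.mem_range.2 hm))
    simp only [evn, this, Option.map_some]

/-! ### From an embedding to a Turing reduction -/

/-- finite join oracle -/
def oJ (A : List ℕ) (P : List (Option ℕ)) (x : ℕ) : Option ℕ :=
  if x % 2 = 0 then A[x / 2]? else (P[x / 2]?).bind id

/-- one approximate application -/
def stepL (c : OCode) (t : ℕ) (A : List ℕ) (P : List (Option ℕ)) : List (Option ℕ) :=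
  (List.range t).map fun k => evn t (oJ A P) c k

/-- initial segment -/
def pre (g : ℕ → ℕ) (t : ℕ) : List ℕ := (List.range t).map g

/-- approximation of `f 4 · f n` at `k0` -/
def approx (c1 c4 : OCode) (k0 t n : ℕ) (A4 A1 F0 : List ℕ) : Option ℕ :=
  evn t (oJ A4 ((stepL c1 t A1)^[n] (F0.map some))) c4 k0

theorem oJ_primrec {α : Type*} [Primcodable α] {A : α → List ℕ} {P : α → List (Option ℕ)}
    (hA : Primrec A) (hP : Primrec P) : Primrec₂ (fun a x => oJ (A a) (P a) x) := by
  have h2 : Primrec (fun p : α × ℕ => p.2 / 2) := Primrec.nat_div.comp Primrec.snd (Primrec.const 2)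
  refine Primrec.ite (Primrec.eq.comp (Primrec.nat_mod.comp Primrec.snd (Primrec.const 2))
    (Primrec.const 0)) (Primrec.list_getElem?.comp (hA.comp Primrec.fst) h2) ?_
  exact Primrec.option_bind (Primrec.list_getElem?.comp (hP.comp Primrec.fst) h2) Primrec.snd

theorem stepL_primrec {α : Type*} [Primcodable α] (c : OCode) {t : α → ℕ} {A : α → List ℕ}
    {P : α → List (Option ℕ)} (ht : Primrec t)
    (hA : Primrec A) (hP : Primrec P) : Primrec (fun a => stepL c (t a) (A a) (P a)) :=
  Primrec.list_map (Primrec.list_range.comp ht) (evn_primrec ht (oJ_primrec hA hP) c)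

theorem approx_primrec {α : Type*} [Primcodable α] (c1 c4 : OCode) (k0 : ℕ) {t n : α → ℕ}
    {A4 A1 F0 : α → List ℕ} (ht : Primrec t) (hn : Primrec n) (h4 : Primrec A4) (h1 : Primrec A1)
    (h0 : Primrec F0) :
    Primrec (fun a => approx c1 c4 k0 (t a) (n a) (A4 a) (A1 a) (F0 a)) := by
  refine (evn_primrec ht (oJ_primrec h4 ?_) c4).comp Primrec.id (Primrec.const k0)
  refine Primrec.nat_iterate hn (Primrec.list_map h0 (Primrec.option_some.comp Primrec.snd)) ?_
  exact stepL_primrec c1 (ht.comp Primrec.fst) (h1.comp Primrec.fst) Primrec.snd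

theorem pre_get {g : ℕ → ℕ} {t x v : ℕ} (h : (pre g t)[x]? = some v) : v = g x := by
  simp only [pre, List.getElem?_map, Option.map_eq_some_iff] at h
  obtain ⟨a, ha, rfl⟩ := h
  obtain ⟨_, rfl⟩ := List.getElem?_eq_some_iff.1 ha
  simp

theorem pre_get' {g : ℕ → ℕ} {t x : ℕ} (h : x < t) : (pre g t)[x]? = some (g x) := by
  simp [pre, h]

theorem oJ_sound {a h : ℕ → ℕ} {t : ℕ} {P : List (Option ℕ)}
    (hP : ∀ x v, (P[x]?).bind id = some v → v = h x) (x v : ℕ) (hx : oJ (pre a t) P x = some v) :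
    v ∈ pjoin (toPFun a) (toPFun h) x := by
  unfold oJ at hx
  unfold pjoin
  split_ifs at hx ⊢
  · rw [pre_get hx]; exact Part.mem_some _
  · rw [hP _ _ hx]; exact Part.mem_some _

theorem oJ_complete {a h : ℕ → ℕ} {P : ℕ → List (Option ℕ)}
    (hP : ∀ x, ∀ᶠ t in Filter.atTop, ((P t)[x]?).bind id = some (h x)) (x v : ℕ)
    (hx : v ∈ pjoin (toPFun a) (toPFun h) x) :
    ∀ᶠ t in Filter.atTop, oJ (pre a t) (P t) x = some v := by
  unfold oJ
  unfold pjoin at hx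
  split_ifs at hx ⊢
  · cases Part.mem_some_iff.1 hx
    filter_upwards [Filter.eventually_gt_atTop (x / 2)] with t ht
    exact pre_get' ht
  · cases Part.mem_some_iff.1 hx
    exact hP _

theorem stepL_sound {a h r : ℕ → ℕ} {c : OCode}
    (hr : ∀ k, r k ∈ evalo (pjoin (toPFun a) (toPFun h)) c k) {t : ℕ} {P : List (Option ℕ)}
    (hP : ∀ x v, (P[x]?).bind id = some v → v = h x) (x v : ℕ)
    (hx : ((stepL c t (pre a t) P)[x]?).bind id = some v) : v = r x := by
  simp only [stepL, List.getElem?_map, Option.bind_eq_some_iff, Option.map_eq_some_iff] at hx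
  obtain ⟨_, ⟨y, hy, rfl⟩, hv⟩ := hx
  obtain ⟨_, rfl⟩ := List.getElem?_eq_some_iff.1 hy
  have := evn_sound (oJ_sound hP) c _ _ hv
  simp only [List.getElem_range] at this
  exact Part.mem_unique this (hr x)

theorem stepL_complete {a h r : ℕ → ℕ} {c : OCode}
    (hr : ∀ k, r k ∈ evalo (pjoin (toPFun a) (toPFun h)) c k) {P : ℕ → List (Option ℕ)}
    (hP : ∀ x, ∀ᶠ t in Filter.atTop, ((P t)[x]?).bind id = some (h x)) (x : ℕ) :
    ∀ᶠ t in Filter.atTop, ((stepL c t (pre a t) (P t))[x]?).bind id = some (r x) := by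
  filter_upwards [evn_complete (oJ_complete hP) c _ _ (hr x), Filter.eventually_gt_atTop x]
    with t h1 h2
  simp [stepL, h2, h1]

theorem iter_sound {F : ℕ → ℕ → ℕ} {a1 : ℕ → ℕ} {c1 : OCode}
    (h1 : ∀ n k, F (n + 1) k ∈ evalo (pjoin (toPFun a1) (toPFun (F n))) c1 k) (t n : ℕ) :
    ∀ x v, (((stepL c1 t (pre a1 t))^[n] ((pre (F 0) t).map some))[x]?).bind id = some v →
      v = F n x := by
  induction n with
  | zero =>
    intro x v h
    simp only [Function.iterate_zero, id, List.getElem?_map, Option.bind_eq_some_iff,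
      Option.map_eq_some_iff] at h
    obtain ⟨_, ⟨y, hy, rfl⟩, hv⟩ := h
    cases hv
    exact pre_get hy
  | succ n ih =>
    intro x v h
    rw [Function.iterate_succ_apply'] at h
    exact stepL_sound (h1 n) ih x v h

theorem iter_complete {F : ℕ → ℕ → ℕ} {a1 : ℕ → ℕ} {c1 : OCode}
    (h1 : ∀ n k, F (n + 1) k ∈ evalo (pjoin (toPFun a1) (toPFun (F n))) c1 k) (n : ℕ) :
    ∀ x, ∀ᶠ t in Filter.atTop,
      (((stepL c1 t (pre a1 t))^[n] ((pre (F 0) t).map some))[x]?).bind id = some (F n x) := by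
  induction n with
  | zero =>
    intro x
    filter_upwards [Filter.eventually_gt_atTop x] with t ht
    simp [pre_get' ht]
  | succ n ih =>
    intro x
    simp only [Function.iterate_succ_apply']
    exact stepL_complete (h1 n) ih x

theorem pre_recursive {O : ℕ →. ℕ} {g : ℕ → ℕ} (hg : RecursiveIn O (toPFun g)) :
    ∃ c, ∀ t, evalo O c t = Part.some (Encodable.encode (pre g t)) := by
  obtain ⟨cg, hcg⟩ := hg
  have hcg : ∀ n, evalo O cg n = Part.some (g n) := fun n => by rw [hcg]; rfl
  let G : ℕ → ℕ := fun z => Encodable.encode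
    (((Encodable.decode z.unpair.2 : Option (List ℕ)).getD []) ++ [z.unpair.1])
  have hG : Primrec G := by
    refine Primrec.encode.comp (Primrec.list_concat.comp (Primrec.option_getD.comp
      (Primrec.decode.comp (Primrec.snd.comp Primrec.unpair)) (Primrec.const []))
      (Primrec.fst.comp Primrec.unpair))
  obtain ⟨cG, hcG⟩ := exists_ocode_tot hG
  obtain ⟨c0, hc0⟩ := exists_ocode_tot (Primrec.const (α := ℕ) (Encodable.encode ([] : List ℕ)))
  obtain ⟨cy, hcy⟩ := exists_ocode_tot (f := fun z => z.unpair.2.unpair.1)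
    (Primrec.fst.comp (Primrec.unpair.comp (Primrec.snd.comp Primrec.unpair)))
  obtain ⟨ci, hci⟩ := exists_ocode_tot (f := fun z => z.unpair.2.unpair.2)
    (Primrec.snd.comp (Primrec.unpair.comp (Primrec.snd.comp Primrec.unpair)))
  refine ⟨.comp (.prec c0 (.comp cG (.pair (.comp cg cy) ci))) (.pair .zero cId), fun t => ?_⟩
  rw [evalo_comp (evalo_pair (show evalo O .zero t = Part.some 0 from rfl) evalo_cId)]
  simp only [evalo.eq_8, Nat.unpaired, Nat.unpair_pair]
  induction t with
  | zero => exact hc0 O 0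
  | succ t ih =>
    refine (congrArg (fun p => Part.bind p _) ih).trans ?_
    refine (Part.bind_some _ _).trans ?_
    have e1 : evalo O (.comp cg cy)
        (Nat.pair 0 (Nat.pair t (Encodable.encode (pre g t)))) = Part.some (g t) := by
      rw [evalo_comp (hcy _ _)]
      simp [hcg]
    rw [evalo_comp (evalo_pair e1 (hci _ _)), hcG]
    simp [G, pre, List.range_succ]

theorem search_recursive {O : ℕ →. ℕ} {cq : OCode} {q : ℕ → ℕ}
    (hq : ∀ z, evalo O cq z = Part.some (q z)) (hex : ∀ n, ∃ t, q (Nat.pair n t) ≠ 0) :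
    ∃ c, ∀ n, ∃ t, q (Nat.pair n t) ≠ 0 ∧ evalo O c n = Part.some (q (Nat.pair n t)) := by
  obtain ⟨cs, hcs⟩ := exists_ocode_tot (f := fun k : ℕ => 1 - k)
    (Primrec.nat_sub.comp (Primrec.const 1) Primrec.id)
  refine ⟨.comp cq (.pair cId (.comp (.rfind' (.comp cs cq)) (.pair cId .zero))), fun n => ?_⟩
  refine ⟨Nat.find (hex n), Nat.find_spec (hex n), ?_⟩
  have e : evalo O (.comp (.rfind' (.comp cs cq)) (.pair cId .zero)) n =
      Part.some (Nat.find (hex n)) := by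
    rw [evalo_comp (evalo_pair evalo_cId (show evalo O .zero n = Part.some 0 from rfl))]
    have hz : ∀ z, evalo O (.comp cs cq) z = Part.some (1 - q z) := fun z => by
      rw [evalo_comp (hq z), hcs]
    simp only [evalo.eq_9, Nat.unpaired, Nat.unpair_pair]
    refine Part.eq_some_iff.2 ((Part.mem_map_iff _).2 ⟨Nat.find (hex n), ?_, rfl⟩)
    refine Nat.mem_rfind.2 ⟨?_, ?_⟩
    · refine (Part.mem_map_iff _).2 ⟨_, Part.eq_some_iff.1 (hz _), ?_⟩
      have := Nat.find_spec (hex n)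
      simp only [add_zero, decide_eq_true_eq]
      omega
    · intro m hm
      refine (Part.mem_map_iff _).2 ⟨_, Part.eq_some_iff.1 (hz _), ?_⟩
      have := Nat.find_min (hex n) hm
      simp only [add_zero, decide_eq_false_iff_not]
      omega
  rw [evalo_comp (evalo_pair evalo_cId e), hq]

theorem le_of_emb (X Y : Set ℕ) (f : ℕ → K2el Y)
    (hf : IsPCAEmbedding (k1App X) (k2XApp Y) f) : TuringLE X Y := by
  obtain ⟨hinj, happ⟩ := hf
  let χ : ℕ → ℕ := X.indicator (fun _ => 1)
  let F : ℕ → ℕ → ℕ := fun n => (f n).1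
  have hF : ∀ n, RecursiveIn (chi Y) (toPFun (F n)) := fun n => (f n).2
  have hne : F 0 ≠ F 1 := fun h => zero_ne_one (hinj (Subtype.ext h))
  obtain ⟨k0, hk0⟩ := Function.ne_iff.1 hne
  let c1 := OCode.ofNat (F 1 0)
  let c4 := OCode.ofNat (F 4 0)
  have h1 : ∀ n k, F (n + 1) k ∈ evalo (pjoin (toPFun (F 1)) (toPFun (F n))) c1 k := by
    intro n
    refine mem_k2XApp.1 (happ 1 n (n + 1) ?_)
    simp only [k1App, phi, OCode.ofNat]
    exact Part.mem_some _
  have h4 : ∀ n k, F (χ n) k ∈ evalo (pjoin (toPFun (F 4)) (toPFun (F n))) c4 k := by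
    intro n
    refine mem_k2XApp.1 (happ 4 n (χ n) ?_)
    simp only [k1App, phi, OCode.ofNat]
    exact Part.mem_some _
  let Q : ℕ → ℕ → Option ℕ := fun n t =>
    approx c1 c4 k0 t n (pre (F 4) t) (pre (F 1) t) (pre (F 0) t)
  have hQs : ∀ n t v, Q n t = some v → v = F (χ n) k0 := fun n t v h =>
    Part.mem_unique (evn_sound (oJ_sound (iter_sound h1 t n)) c4 _ _ h) (h4 n k0)
  have hQc : ∀ n, ∃ t, Q n t = some (F (χ n) k0) := fun n =>
    (evn_complete (oJ_complete (iter_complete h1 n)) c4 _ _ (h4 n k0)).exists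
  obtain ⟨p4, hp4⟩ := pre_recursive (hF 4)
  obtain ⟨p1, hp1⟩ := pre_recursive (hF 1)
  obtain ⟨p0, hp0⟩ := pre_recursive (hF 0)
  let dec : ℕ → List ℕ := fun z => (Encodable.decode z : Option (List ℕ)).getD []
  have hdec : Primrec dec := Primrec.option_getD.comp Primrec.decode (Primrec.const [])
  let G : ℕ → ℕ := fun z => Encodable.encode (approx c1 c4 k0 z.unpair.1.unpair.2
    z.unpair.1.unpair.1 (dec z.unpair.2.unpair.1) (dec z.unpair.2.unpair.2.unpair.1)
    (dec z.unpair.2.unpair.2.unpair.2))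
  have hG : Primrec G := by
    have u1 : Primrec (fun z : ℕ => z.unpair.1.unpair) :=
      Primrec.unpair.comp (Primrec.fst.comp Primrec.unpair)
    have u2 : Primrec (fun z : ℕ => z.unpair.2.unpair) :=
      Primrec.unpair.comp (Primrec.snd.comp Primrec.unpair)
    have u3 : Primrec (fun z : ℕ => z.unpair.2.unpair.2.unpair) :=
      Primrec.unpair.comp (Primrec.snd.comp u2)
    exact Primrec.encode.comp (approx_primrec c1 c4 k0 (Primrec.snd.comp u1) (Primrec.fst.comp u1)
      (hdec.comp (Primrec.fst.comp u2)) (hdec.comp (Primrec.fst.comp u3))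
      (hdec.comp (Primrec.snd.comp u3)))
  obtain ⟨cG, hcG⟩ := exists_ocode_tot hG
  let cq : OCode := .comp cG (.pair cId (.pair (.comp p4 .right)
    (.pair (.comp p1 .right) (.comp p0 .right))))
  have hq : ∀ z, evalo (chi Y) cq z =
      Part.some (Encodable.encode (Q z.unpair.1 z.unpair.2)) := by
    intro z
    have hr : evalo (chi Y) .right z = Part.some z.unpair.2 := rfl
    rw [evalo_comp (evalo_pair evalo_cId (evalo_pair ((evalo_comp hr).trans (hp4 _))
      (evalo_pair ((evalo_comp hr).trans (hp1 _)) ((evalo_comp hr).trans (hp0 _))))), hcG]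
    simp [G, dec, Q]
  obtain ⟨cs, hcs⟩ := search_recursive hq (fun n => by
    obtain ⟨t, ht⟩ := hQc n
    exact ⟨t, by simp [ht]⟩)
  obtain ⟨cf, hcf⟩ := exists_ocode_tot (f := fun v : ℕ => if v = F 1 k0 + 1 then 1 else 0)
    (Primrec.ite (Primrec.eq.comp Primrec.id (Primrec.const _)) (Primrec.const 1)
      (Primrec.const 0))
  refine ⟨.comp cf cs, funext fun n => ?_⟩
  change evalo _ _ n = Part.some (χ n)
  obtain ⟨t, ht0, ht⟩ := hcs n
  rw [evalo_comp ht, hcf]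
  simp only [Nat.unpair_pair] at ht0 ⊢
  cases hv : Q n t with
  | none => simp [hv] at ht0
  | some v =>
    have := hQs n t v hv
    subst this
    by_cases hn : n ∈ X
    · simp [χ, hn]
    · simp [χ, hn, hk0]

theorem stmt9 (X Y : Set ℕ) :
    (∃ f : ℕ → K2el Y, IsPCAEmbedding (k1App X) (k2XApp Y) f) ↔
      TuringLE X Y := by
  exact ⟨fun ⟨f, hf⟩ => le_of_emb X Y f hf, emb_of_le X Y⟩

end PCAEmb
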